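/- Let X be a Cantor space and K a dynamical simplex on X. Given any KR-partition T for K and clopen subsets U, V of X with U ∼_K V, there exists a KR-partition S for K which refines T, is compatible with U and with V (i.e., each of U and V is a union of atoms of S), and is such that in each column of S the number of atoms contained in U equals the number of atoms contained in V. -/

import Mathlib

/-!
Cut the columns of `T` until they are compatible with `U` and `V`, and give each resulting column
`c` its imbalance `n(c)`, the number of its atoms in `U` minus the number of its atoms in `V`. Since
`U ∼ V`, the relation `∑ n(c) μ(c) = 0` holds for every `μ ∈ K`, where `μ(c)` is the common measure
of the atoms of `c`. It remains to cut and stack until every imbalance is zero.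

Let `m` be the maximum of `|n(c)|` and suppose that `n(p) = m > 0` (if `n(p) = -m`, exchange `U` and
`V`). Let `Y` be the union of the bases of the columns with negative imbalance. The relation
gives `m μ(p) ≤ m μ(Y)` for every `μ ∈ K`. If equality holds for one `μ`, then by full support the
terms lost in the inequality vanish for all `μ`, so equality holds throughout `K`; otherwise the
inequality is strict throughout `K` and goodness applies. Either way the base of `p` is equivalent
to a clopen subset `C` of `Y`. Cut `p` into pieces equivalent to the sets `C ∩ base q`, where
`n(q) < 0`, cut each `q` accordingly, and stack the matching pieces. The stacked columns have
imbalance `m + n(q) ∈ [0, m)` and the remainders of the columns `q` keep their imbalance, so in the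
multiset of all `|n(c)|` one copy of `m` has been replaced by finitely many smaller numbers. By
the well-foundedness of the Dershowitz–Manna order this process terminates.
-/

open MeasureTheory

namespace DynSimplex

variable {X : Type*} [TopologicalSpace X] [MeasurableSpace X] [OpensMeasurableSpace X]

/-- `g` preserves the probability measure `μ`, i.e. `g_*μ = μ`. -/
def Preserves (g : X ≃ₜ X) (μ : ProbabilityMeasure X) : Prop :=
  (μ : Measure X).map g = (μ : Measure X)

/-- A homeomorphism is minimal if all of its (two-sided) orbits are dense. -/
def IsMinimal (g : X ≃ₜ X) : Prop :=
  ∀ x : X, Dense (Set.range fun n : ℤ => (g.toEquiv ^ n) x)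

/-- A set of probability measures is good if for all clopen `A`, `B` with `μ A < μ B` for
all `μ ∈ K`, there is a clopen `C ⊆ B` with `μ C = μ A` for all `μ ∈ K`. -/
def Good (K : Set (ProbabilityMeasure X)) : Prop :=
  ∀ A B : Set X, IsClopen A → IsClopen B → (∀ μ ∈ K, μ A < μ B) →
    ∃ C : Set X, IsClopen C ∧ C ⊆ B ∧ ∀ μ ∈ K, μ C = μ A

/-- Approximate divisibility of a set of probability measures. -/
def ApproximatelyDivisible (K : Set (ProbabilityMeasure X)) : Prop :=
  ∀ A : Set X, IsClopen A → ∀ n : ℕ, 1 ≤ n → ∀ ε : ℝ, 0 < ε →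
    ∃ B : Set X, IsClopen B ∧ B ⊆ A ∧
      ∀ μ ∈ K, (μ A : ℝ) - ε ≤ (n : ℝ) * (μ B : ℝ) ∧ (n : ℝ) * (μ B : ℝ) ≤ (μ A : ℝ)

/-- A probability measure has full support if every nonempty open set has positive measure. -/
def FullSupport (μ : ProbabilityMeasure X) : Prop :=
  ∀ U : Set X, IsOpen U → U.Nonempty → 0 < μ U

/-- A probability measure is atomless if all singletons are null. -/
def Atomless (μ : ProbabilityMeasure X) : Prop :=
  ∀ x : X, μ {x} = 0

/-- Convexity of a set of probability measures (as a subset of the `ℝ≥0`-module of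
finite measures). -/
def ProbConvex (K : Set (ProbabilityMeasure X)) : Prop :=
  Convex NNReal (ProbabilityMeasure.toFiniteMeasure '' K)

/-- The set of extreme points of a set of probability measures. -/
def ProbExtremePoints (K : Set (ProbabilityMeasure X)) : Set (ProbabilityMeasure X) :=
  ProbabilityMeasure.toFiniteMeasure ⁻¹'
    (Set.extremePoints NNReal (ProbabilityMeasure.toFiniteMeasure '' K))

/-- A dynamical simplex: a nonempty compact convex set of atomless, fully supported
probability measures which is good and approximately divisible. -/
def DynamicalSimplex (K : Set (ProbabilityMeasure X)) : Prop :=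
  K.Nonempty ∧ IsCompact K ∧ ProbConvex K ∧
    (∀ μ ∈ K, Atomless μ ∧ FullSupport μ) ∧ Good K ∧ ApproximatelyDivisible K

/-- Membership in the full group of `g`. -/
def InFullGroup (g h : X ≃ₜ X) : Prop :=
  ∀ x : X, ∃ n : ℤ, h x = (g.toEquiv ^ n) x

/-- Membership in the topological full group of `g`: `h` is given piecewise by powers of `g`
on a finite clopen partition of `X`. -/
def InTopologicalFullGroup (g h : X ≃ₜ X) : Prop :=
  ∃ (k : ℕ) (A : Fin k → Set X) (n : Fin k → ℤ),
    (∀ i, IsClopen (A i)) ∧ (∀ x : X, ∃! i, x ∈ A i) ∧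
    ∀ i, ∀ x ∈ A i, h x = (g.toEquiv ^ (n i)) x

/-- `g` preserves every measure in `K` (i.e. `g` belongs to the group `G`). -/
def PreservesAll (K : Set (ProbabilityMeasure X)) (g : X ≃ₜ X) : Prop :=
  ∀ μ ∈ K, Preserves g μ

/-- `g` is `K`-saturated: any two `K`-equivalent clopen sets are mapped one to the other by
an element of the topological full group of `g`. -/
def KSaturated (K : Set (ProbabilityMeasure X)) (g : X ≃ₜ X) : Prop :=
  ∀ U V : Set X, IsClopen U → IsClopen V → (∀ μ ∈ K, μ U = μ V) →
    ∃ h : X ≃ₜ X, InTopologicalFullGroup g h ∧ h '' U = V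

/-- The topology of uniform convergence on the homeomorphism group of a compact space
(the compact-open topology, induced from `C(X, X)`). -/
instance : TopologicalSpace (X ≃ₜ X) :=
  TopologicalSpace.induced (fun h : X ≃ₜ X => (h : C(X, X))) inferInstance

/-- A KR-partition for `K`: a finite family of columns, each column being a finite sequence of
clopen sets which are all `K`-equivalent, the atoms of all columns forming a partition of `X`. -/
structure KRPartition (X : Type*) [TopologicalSpace X] [MeasurableSpace X]
    (K : Set (ProbabilityMeasure X)) where
  numCols : ℕ
  height : Fin numCols → ℕ
  atom : (i : Fin numCols) → Fin (height i + 1) → Set X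
  clopen : ∀ i j, IsClopen (atom i j)
  equivK : ∀ i j j', ∀ μ ∈ K, μ (atom i j) = μ (atom i j')
  partition : ∀ x : X, ∃! p : (i : Fin numCols) × Fin (height i + 1), x ∈ atom p.1 p.2

/-- The base of a KR-partition: the union of the first atoms of the columns. -/
def KRPartition.base {K : Set (ProbabilityMeasure X)} (T : KRPartition X K) : Set X :=
  ⋃ i, T.atom i 0

/-- The top of a KR-partition: the union of the last atoms of the columns. -/
def KRPartition.top {K : Set (ProbabilityMeasure X)} (T : KRPartition X K) : Set X :=
  ⋃ i, T.atom i (Fin.last _)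

/-- `S` refines `T`: the base (resp. top) of `S` is contained in the base (resp. top) of `T`,
and every column of `S` is obtained by cutting and stacking columns of `T`. -/
def KRPartition.Refines {K : Set (ProbabilityMeasure X)} (S T : KRPartition X K) : Prop :=
  S.base ⊆ T.base ∧ S.top ⊆ T.top ∧
  ∀ c : Fin S.numCols, ∃ (m : ℕ) (idx : Fin (m + 1) → Fin T.numCols)
    (piece : (k : Fin (m + 1)) → Fin (T.height (idx k) + 1) → Set X),
    (∀ k j, piece k j ⊆ T.atom (idx k) j) ∧
    (S.height c + 1 = ∑ k : Fin (m + 1), (T.height (idx k) + 1)) ∧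
    ∀ (k : Fin (m + 1)) (j : Fin (T.height (idx k) + 1))
      (hlt : (∑ l ∈ Finset.Iio k, (T.height (idx l) + 1)) + (j : ℕ) < S.height c + 1),
      S.atom c ⟨(∑ l ∈ Finset.Iio k, (T.height (idx l) + 1)) + (j : ℕ), hlt⟩ = piece k j

/-- A KR-partition is compatible with a clopen set `U` if `U` is a union of its atoms,
equivalently every atom is either contained in `U` or disjoint from it. -/
def KRPartition.Compatible {K : Set (ProbabilityMeasure X)} (S : KRPartition X K)
    (U : Set X) : Prop :=
  ∀ i j, S.atom i j ⊆ U ∨ Disjoint (S.atom i j) U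

end DynSimplex

namespace DynSimplex

/-! ### Multiplicity of finite families of sets -/

section Multiplicity

variable {X : Type*}

/-- The multiplicity function of a finite family of sets: the number of members of `s` which
contain a given point. The family is a partition of `X` exactly when `mult s = 1`. -/
noncomputable def mult (s : Multiset (Set X)) : X → ℕ :=
  (s.map fun A => A.indicator 1).sum

@[simp]
theorem mult_zero : mult (0 : Multiset (Set X)) = 0 := rfl

@[simp]
theorem mult_cons (A : Set X) (s : Multiset (Set X)) :
    mult (A ::ₘ s) = A.indicator 1 + mult s := by
  simp [mult]

@[simp]
theorem mult_add (s t : Multiset (Set X)) : mult (s + t) = mult s + mult t := by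
  simp [mult]

theorem mult_mono {s t : Multiset (Set X)} (h : s ≤ t) : mult s ≤ mult t := by
  obtain ⟨u, rfl⟩ := Multiset.le_iff_exists_add.1 h
  rw [mult_add]
  exact le_self_add

theorem mult_ne_zero_iff {s : Multiset (Set X)} {x : X} : mult s x ≠ 0 ↔ ∃ A ∈ s, x ∈ A := by
  induction s using Multiset.induction_on with
  | empty => simp
  | cons A s ih =>
    rw [mult_cons, Pi.add_apply, Ne, Nat.add_eq_zero_iff, not_and_or, ← Ne, ← Ne, ih]
    simp

theorem mult_eq_indicator_iUnion {s : Multiset (Set X)} (hs : mult s ≤ 1) :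
    mult s = (⋃ A ∈ s, A).indicator 1 := by
  funext x
  have hx := mult_ne_zero_iff (s := s) (x := x)
  by_cases h : ∃ A ∈ s, x ∈ A
  · rw [Set.indicator_of_mem (by simpa using h)]
    exact le_antisymm (hs x) (Nat.one_le_iff_ne_zero.2 (hx.2 h))
  · rw [Set.indicator_of_notMem (by simpa using h)]
    exact not_not.1 (mt hx.1 h)

theorem mult_map_inter (s : Multiset (Set X)) (W : Set X) :
    mult (s.map (· ∩ W)) = W.indicator (mult s) := by
  induction s using Multiset.induction_on with
  | empty => simp
  | cons A s ih =>
    rw [Multiset.map_cons, mult_cons, mult_cons, ih, Set.indicator_add', Set.indicator_indicator,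
      Set.inter_comm]

theorem mult_map_add_mult_map_sdiff {s : Multiset (Set X)} {f : Set X → Set X}
    (hf : ∀ A ∈ s, f A ⊆ A) : mult (s.map f) + mult (s.map fun A => A \ f A) = mult s := by
  induction s using Multiset.induction_on with
  | empty => simp
  | cons A s ih =>
    rw [Multiset.forall_mem_cons] at hf
    have hA : (f A).indicator 1 + (A \ f A).indicator 1 = A.indicator (1 : X → ℕ) := by
      conv_rhs => rw [← Set.union_sdiff_cancel hf.1]
      exact (Set.indicator_union_of_disjoint Set.disjoint_sdiff_right (1 : X → ℕ)).symm
    rw [Multiset.map_cons, Multiset.map_cons, mult_cons, mult_cons, mult_cons, add_add_add_comm,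
      hA, ih hf.2]

/-- The atoms of a finite family of columns. -/
def atoms (R : Multiset (List (Set X))) : Multiset (Set X) :=
  R.bind (↑)

@[simp]
theorem atoms_cons (c : List (Set X)) (R : Multiset (List (Set X))) :
    atoms (c ::ₘ R) = c + atoms R := by
  simp [atoms]

@[simp]
theorem atoms_add (R S : Multiset (List (Set X))) : atoms (R + S) = atoms R + atoms S := by
  simp [atoms]

theorem mult_atoms_ofFn_eq_one_iff {n : ℕ} {h : Fin n → ℕ} {A : (i : Fin n) → Fin (h i) → Set X} :
    mult (atoms (Finset.univ.val.map fun i => List.ofFn (A i))) = 1 ↔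
      ∀ x, ∃! p : (i : Fin n) × Fin (h i), x ∈ A p.1 p.2 := by
  classical
  rw [funext_iff]
  refine forall_congr' fun x => ?_
  have hcard : mult (atoms (Finset.univ.val.map fun i => List.ofFn (A i))) x =
      ∑ p : (i : Fin n) × Fin (h i), if x ∈ A p.1 p.2 then 1 else 0 := by
    simp only [mult, atoms, Multiset.bind_map, Multiset.map_bind, Multiset.sum_bind,
      Multiset.map_coe, Multiset.sum_coe, List.map_ofFn, List.sum_ofFn, Fintype.sum_sigma]
    change (∑ i, ∑ j, (A i j).indicator 1 : X → ℕ) x = _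
    simp only [Finset.sum_apply, Set.indicator_apply, Pi.one_apply]
  rw [Fintype.existsUnique_iff_card_one, hcard, Finset.sum_boole, Pi.one_apply, Nat.cast_id]

end Multiplicity

/-! ### Clopen sets up to equivalence -/

section KEquiv

variable {X : Type*} [MeasurableSpace X] {K : Set (ProbabilityMeasure X)} {A B C D : Set X}

/-- The relation `A ∼_K B`: all measures in `K` agree on `A` and `B`. -/
def KEquiv (K : Set (ProbabilityMeasure X)) (A B : Set X) : Prop :=
  ∀ μ ∈ K, μ A = μ B

theorem KEquiv.symm (h : KEquiv K A B) : KEquiv K B A := fun μ hμ => (h μ hμ).symm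

theorem KEquiv.trans (h : KEquiv K A B) (h' : KEquiv K B C) : KEquiv K A C :=
  fun μ hμ => (h μ hμ).trans (h' μ hμ)

variable [TopologicalSpace X]

theorem FullSupport.pos_iff {μ : ProbabilityMeasure X} (hμ : FullSupport μ) (hA : IsOpen A) :
    0 < μ A ↔ A.Nonempty := by
  refine ⟨fun h => ?_, hμ A hA⟩
  by_contra hA'
  simp [Set.not_nonempty_iff_eq_empty.1 hA'] at h

theorem KEquiv.nonempty_iff (hne : K.Nonempty) (hF : ∀ μ ∈ K, FullSupport μ) (hA : IsOpen A)
    (hB : IsOpen B) (h : KEquiv K A B) : A.Nonempty ↔ B.Nonempty := by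
  obtain ⟨μ, hμ⟩ := hne
  rw [← (hF μ hμ).pos_iff hA, ← (hF μ hμ).pos_iff hB, h μ hμ]

theorem Good.exists_subset_of_add_eq (hG : Good K) (hF : ∀ μ ∈ K, FullSupport μ) (hA : IsClopen A)
    (hB : IsClopen B) (hD : IsClopen D) (h : ∀ μ ∈ K, μ A + μ B = μ D) :
    ∃ C, IsClopen C ∧ C ⊆ D ∧ KEquiv K C A := by
  rcases B.eq_empty_or_nonempty with rfl | hB'
  · exact ⟨D, hD, subset_rfl, fun μ hμ => by simp [← h μ hμ]⟩
  · refine hG A D hA hD fun μ hμ => ?_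
    rw [← h μ hμ]
    exact lt_add_of_pos_right _ (hF μ hμ B hB.isOpen hB')

variable [OpensMeasurableSpace X]

theorem measure_add_measure_sdiff (μ : ProbabilityMeasure X) (hA : IsClopen A) (hAB : A ⊆ B) :
    μ A + μ (B \ A) = μ B := by
  apply ENNReal.coe_injective
  push_cast
  simpa [Set.inter_eq_self_of_subset_right hAB] using
    measure_inter_add_sdiff (μ := (μ : Measure X)) B hA.isOpen.measurableSet

theorem KEquiv.sdiff (hA : IsClopen A) (hAB : A ⊆ B) (hC : IsClopen C) (hCD : C ⊆ D)
    (hBD : KEquiv K B D) (hAC : KEquiv K A C) : KEquiv K (B \ A) (D \ C) := fun μ hμ => by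
  have h := hBD μ hμ
  rw [← measure_add_measure_sdiff μ hA hAB, ← measure_add_measure_sdiff μ hC hCD, hAC μ hμ] at h
  exact add_left_cancel h

theorem sum_measure_eq_of_mult_eq_indicator (μ : ProbabilityMeasure X) {s : Multiset (Set X)}
    (hs : ∀ A ∈ s, IsClopen A) {S : Set X} (h : mult s = S.indicator 1) :
    (s.map fun A => μ A).sum = μ S := by
  induction s using Multiset.induction_on generalizing S with
  | empty =>
    obtain rfl : S = ∅ := by simpa [Function.support_one] using Set.indicator_eq_zero.1 h.symm
    simp
  | cons A s ih =>
    rw [Multiset.forall_mem_cons] at hs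
    rw [mult_cons] at h
    have hAS : A ⊆ S := fun x hx => by
      by_contra hxS
      simpa [hx, hxS] using congrFun h x
    have hmult : mult s = (S \ A).indicator 1 := by
      funext x
      have hx := congrFun h x
      by_cases hxA : x ∈ A
      · simpa [hxA, hAS hxA] using hx
      · by_cases hxS : x ∈ S <;> simpa [hxA, hxS] using hx
    rw [Multiset.map_cons, Multiset.sum_cons, ih hs.2 hmult, measure_add_measure_sdiff μ hs.1 hAS]

end KEquiv

/-! ### Columns and towers -/

section Columns

variable {X : Type*} {f : Set X → Set X} {c d : List (Set X)}

/-- The base of a column: its first atom (`∅` for the empty list). -/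
def columnBase (c : List (Set X)) : Set X := c.headD ∅

theorem columnBase_mem (hc : c ≠ []) : columnBase c ∈ c := by
  obtain ⟨A, c, rfl⟩ := List.exists_cons_of_ne_nil hc
  exact List.mem_cons_self

theorem columnBase_map (hc : c ≠ []) : columnBase (c.map f) = f (columnBase c) := by
  obtain ⟨A, c, rfl⟩ := List.exists_cons_of_ne_nil hc
  rfl

theorem map_columnBase_le_atoms {L : Multiset (List (Set X))} (hL : ∀ c ∈ L, c ≠ []) :
    L.map columnBase ≤ atoms L := by
  induction L using Multiset.induction_on with
  | empty => simp
  | cons c L ih =>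
    rw [Multiset.forall_mem_cons] at hL
    rw [Multiset.map_cons, atoms_cons, ← Multiset.singleton_add]
    exact add_le_add (Multiset.singleton_le.2 (columnBase_mem hL.1)) (ih hL.2)

/-- `d` lies atomwise inside the column `c`. -/
def IsSubcolumn (d c : List (Set X)) : Prop :=
  List.Forall₂ (· ⊆ ·) d c

theorem IsSubcolumn.trans {e : List (Set X)} (h : IsSubcolumn e d) (h' : IsSubcolumn d c) :
    IsSubcolumn e c := by
  induction h generalizing c with
  | nil => exact h'
  | cons hA _ ih =>
    obtain ⟨B, c, hB, hd, rfl⟩ := List.forall₂_cons_left_iff.1 h'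
    exact .cons (hA.trans hB) (ih hd)

end Columns

section Towers

variable {X : Type*} [TopologicalSpace X] [MeasurableSpace X] {K : Set (ProbabilityMeasure X)}
  {A D : Set X} {f : Set X → Set X} {c d : List (Set X)}

/-- A tower over `K`: a nonempty column of pairwise equivalent clopen sets. -/
structure IsTower (K : Set (ProbabilityMeasure X)) (c : List (Set X)) : Prop where
  ne_nil : c ≠ []
  isClopen : ∀ A ∈ c, IsClopen A
  kEquiv : ∀ A ∈ c, ∀ B ∈ c, KEquiv K A B

/-- A vertical cut of the tower `c`: every atom `A` has a clopen part `f A`, and these parts are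
pairwise equivalent. The tower splits into `c.map f` and `c.map fun A => A \ f A`. -/
structure IsCut (K : Set (ProbabilityMeasure X)) (c : List (Set X)) (f : Set X → Set X) :
    Prop where
  subset : ∀ A ∈ c, f A ⊆ A
  isClopen : ∀ A ∈ c, IsClopen (f A)
  kEquiv : ∀ A ∈ c, ∀ B ∈ c, KEquiv K (f A) (f B)

theorem IsCut.compl [OpensMeasurableSpace X] (hf : IsCut K c f) (hc : IsTower K c) :
    IsCut K c fun A => A \ f A where
  subset _ _ := Set.sdiff_subset
  isClopen A hA := (hc.isClopen A hA).diff (hf.isClopen A hA)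
  kEquiv A hA B hB := .sdiff (hf.isClopen A hA) (hf.subset A hA) (hf.isClopen B hB)
    (hf.subset B hB) (hc.kEquiv A hA B hB) (hf.kEquiv A hA B hB)

theorem IsCut.isSubcolumn_map (hf : IsCut K c f) : IsSubcolumn (c.map f) c :=
  List.forall₂_map_left_iff.2 (List.forall₂_same.2 hf.subset)

theorem IsCut.mult_add_mult (hf : IsCut K c f) :
    mult (c.map f : List (Set X)) + mult (c.map fun A => A \ f A : List (Set X)) =
      mult (c : Multiset (Set X)) :=
  mult_map_add_mult_map_sdiff (s := (c : Multiset (Set X))) hf.subset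

theorem IsTower.map (hc : IsTower K c) (hf : IsCut K c f) : IsTower K (c.map f) where
  ne_nil := by simpa using hc.ne_nil
  isClopen := List.forall_mem_map.2 hf.isClopen
  kEquiv := List.forall_mem_map.2 fun A hA => List.forall_mem_map.2 (hf.kEquiv A hA)

theorem IsTower.append (hc : IsTower K c) (hd : IsTower K d)
    (h : KEquiv K (columnBase c) (columnBase d)) : IsTower K (c ++ d) where
  ne_nil := List.append_ne_nil_of_left_ne_nil hc.ne_nil d
  isClopen A hA := (List.mem_append.1 hA).elim (hc.isClopen A) (hd.isClopen A)
  kEquiv := by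
    have hcd : ∀ A ∈ c, ∀ B ∈ d, KEquiv K A B := fun A hA B hB =>
      ((hc.kEquiv A hA _ (columnBase_mem hc.ne_nil)).trans h).trans
        (hd.kEquiv _ (columnBase_mem hd.ne_nil) B hB)
    intro A hA B hB
    rcases List.mem_append.1 hA with hA | hA <;> rcases List.mem_append.1 hB with hB | hB
    exacts [hc.kEquiv A hA B hB, hcd A hA B hB, (hcd B hB A hA).symm, hd.kEquiv A hA B hB]

theorem IsTower.exists_isCut [OpensMeasurableSpace X] (hc : IsTower K c) (hG : Good K)
    (hF : ∀ μ ∈ K, FullSupport μ) (hA : A ∈ c) (hD : IsClopen D) (hDA : D ⊆ A) :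
    ∃ f, IsCut K c f ∧ f A = D := by
  classical
  have hcopy : ∀ B ∈ c, ∃ C, IsClopen C ∧ C ⊆ B ∧ KEquiv K C D := fun B hB =>
    hG.exists_subset_of_add_eq hF hD ((hc.isClopen A hA).diff hD) (hc.isClopen B hB) fun μ hμ => by
      rw [measure_add_measure_sdiff μ hD hDA, hc.kEquiv A hA B hB μ hμ]
  choose! g hg using hcopy
  have hupdate : ∀ B ∈ c, IsClopen (Function.update g A D B) ∧ Function.update g A D B ⊆ B ∧
      KEquiv K (Function.update g A D B) D := fun B hB => by
    rcases eq_or_ne B A with rfl | hBA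
    · rw [Function.update_self]
      exact ⟨hD, hDA, fun _ _ => rfl⟩
    · rw [Function.update_of_ne hBA]
      exact hg B hB
  refine ⟨Function.update g A D, ⟨fun B hB => (hupdate B hB).2.1, fun B hB => (hupdate B hB).1,
    fun B hB C hC => (hupdate B hB).2.2.trans (hupdate C hC).2.2.symm⟩, Function.update_self ..⟩

theorem IsTower.nonempty_iff (hne : K.Nonempty) (hF : ∀ μ ∈ K, FullSupport μ) (hc : IsTower K c)
    (hA : A ∈ c) : A.Nonempty ↔ (columnBase c).Nonempty :=
  have hbase := columnBase_mem hc.ne_nil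
  (hc.kEquiv A hA _ hbase).nonempty_iff hne hF (hc.isClopen A hA).isOpen
    (hc.isClopen _ hbase).isOpen

theorem IsTower.mult_eq_zero (hne : K.Nonempty) (hF : ∀ μ ∈ K, FullSupport μ) (hc : IsTower K c)
    (hbase : ¬(columnBase c).Nonempty) : mult (c : Multiset (Set X)) = 0 := by
  funext x
  by_contra hx
  obtain ⟨A, hA, hxA⟩ := mult_ne_zero_iff.1 hx
  exact hbase ((hc.nonempty_iff hne hF hA).1 ⟨x, hxA⟩)

end Towers

/-! ### Compatibility with a set -/

section Compatible

variable {X : Type*} {W : Set X} {c d : List (Set X)}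

/-- Every atom of the column `c` is contained in `W` or disjoint from `W`. -/
def IsCompatible (W : Set X) (c : List (Set X)) : Prop :=
  ∀ A ∈ c, A ⊆ W ∨ Disjoint A W

theorem IsCompatible.of_isSubcolumn (hc : IsCompatible W c) (h : IsSubcolumn d c) :
    IsCompatible W d := by
  induction h with
  | nil => exact hc
  | cons hBA _ ih =>
    rw [IsCompatible, List.forall_mem_cons] at hc
    exact List.forall_mem_cons.2 ⟨hc.1.imp hBA.trans fun h => h.mono_left hBA, ih hc.2⟩

theorem IsCompatible.append (hc : IsCompatible W c) (hd : IsCompatible W d) :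
    IsCompatible W (c ++ d) :=
  List.forall_mem_append.2 ⟨hc, hd⟩

open Classical in
/-- The number of atoms of the column `c` which are contained in `W`. -/
noncomputable def numIn (W : Set X) (c : List (Set X)) : ℕ :=
  c.countP (· ⊆ W)

theorem numIn_append : numIn W (c ++ d) = numIn W c + numIn W d :=
  List.countP_append

theorem IsCompatible.numIn_eq_of_isSubcolumn (hc : IsCompatible W c)
    (h : IsSubcolumn d c) (hd : ∀ A ∈ d, A.Nonempty) : numIn W d = numIn W c := by
  induction h with
  | nil => rfl
  | @cons B A d c hBA _ ih =>
    rw [IsCompatible, List.forall_mem_cons] at hc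
    rw [List.forall_mem_cons] at hd
    have hiff : B ⊆ W ↔ A ⊆ W := by
      refine ⟨fun hB => hc.1.resolve_right fun hA => ?_, hBA.trans⟩
      obtain ⟨x, hx⟩ := hd.1
      exact Set.disjoint_left.1 hA (hBA hx) (hB hx)
    have hdc := ih hc.2 hd.2
    unfold numIn at hdc ⊢
    by_cases hA : A ⊆ W
    · rw [List.countP_cons_of_pos (by simpa using hiff.2 hA),
        List.countP_cons_of_pos (by simpa using hA), hdc]
    · rw [List.countP_cons_of_neg (by simpa using mt hiff.1 hA),
        List.countP_cons_of_neg (by simpa using hA), hdc]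

theorem IsCompatible.sum_measure_inter [MeasurableSpace X] {μ : ProbabilityMeasure X} {m : NNReal}
    (hc : IsCompatible W c) (hm : ∀ A ∈ c, μ A = m) :
    (c.map fun A => μ (A ∩ W)).sum = numIn W c * m := by
  induction c with
  | nil => simp [numIn]
  | cons A c ih =>
    rw [IsCompatible, List.forall_mem_cons] at hc
    rw [List.forall_mem_cons] at hm
    rw [List.map_cons, List.sum_cons, ih hc.2 hm.2]
    by_cases hA : A ⊆ W
    · simp [numIn, hA, Set.inter_eq_self_of_subset_left, hm.1, add_mul, add_comm]
    · simp [numIn, hA, (hc.1.resolve_left hA).inter_eq]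

variable [TopologicalSpace X] [MeasurableSpace X] [OpensMeasurableSpace X]
  {K : Set (ProbabilityMeasure X)}

theorem IsTower.exists_compatible_of_drop (hG : Good K) (hF : ∀ μ ∈ K, FullSupport μ)
    (hW : IsClopen W) (n : ℕ) (hc : IsTower K c) (hdrop : IsCompatible W (c.drop n)) :
    ∃ R : Multiset (List (Set X)),
      (∀ d ∈ R, IsTower K d ∧ IsCompatible W d ∧ IsSubcolumn d c) ∧
      mult (atoms R) = mult (c : Multiset (Set X)) := by
  induction n generalizing c with
  | zero => exact ⟨{c}, by simpa using ⟨hc, hdrop, List.forall₂_refl c⟩, by simp [atoms]⟩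
  | succ n ih =>
    rcases le_or_gt c.length n with hn | hn
    · exact ih hc (by simp [IsCompatible, List.drop_eq_nil_of_le hn])
    obtain ⟨A, hA⟩ : ∃ A, c.drop n = A :: c.drop (n + 1) := ⟨_, List.drop_eq_getElem_cons hn⟩
    have hAc : A ∈ c := List.mem_of_mem_drop (hA ▸ List.mem_cons_self)
    have piece : ∀ g, IsCut K c g → g A ⊆ W ∨ Disjoint (g A) W →
        ∃ R : Multiset (List (Set X)),
          (∀ d ∈ R, IsTower K d ∧ IsCompatible W d ∧ IsSubcolumn d c) ∧
          mult (atoms R) = mult (c.map g : List (Set X)) := fun g hg hgA => by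
      have hgdrop : IsCompatible W ((c.map g).drop n) := by
        have hrest := hdrop.of_isSubcolumn (List.forall₂_drop (n + 1) hg.isSubcolumn_map)
        rw [← List.map_drop] at hrest ⊢
        rw [hA]
        exact List.forall_mem_cons.2 ⟨hgA, hrest⟩
      obtain ⟨R, hR, hmult⟩ := ih (hc.map hg) hgdrop
      exact ⟨R, fun d hd => (hR d hd).imp_right (.imp_right fun h => h.trans hg.isSubcolumn_map),
        hmult⟩
    obtain ⟨f, hf, hfA⟩ := hc.exists_isCut hG hF hAc ((hc.isClopen A hAc).inter hW)
      Set.inter_subset_left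
    obtain ⟨R, hR, hRmult⟩ := piece f hf (.inl (hfA ▸ Set.inter_subset_right))
    obtain ⟨R', hR', hRmult'⟩ := piece (fun A => A \ f A) (hf.compl hc)
      (.inr (by rw [hfA, Set.sdiff_self_inter]; exact Set.disjoint_sdiff_left))
    refine ⟨R + R', fun d hd => (Multiset.mem_add.1 hd).elim (hR d) (hR' d), ?_⟩
    rw [atoms_add, mult_add, hRmult, hRmult', hf.mult_add_mult]

theorem exists_compatible (hG : Good K) (hF : ∀ μ ∈ K, FullSupport μ) (hW : IsClopen W)
    {L : Multiset (List (Set X))} (hL : ∀ c ∈ L, IsTower K c) :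
    ∃ R : Multiset (List (Set X)),
      (∀ d ∈ R, IsTower K d ∧ IsCompatible W d ∧ ∃ c ∈ L, IsSubcolumn d c) ∧
      mult (atoms R) = mult (atoms L) := by
  induction L using Multiset.induction_on with
  | empty => exact ⟨0, by simp, rfl⟩
  | cons c L ih =>
    rw [Multiset.forall_mem_cons] at hL
    obtain ⟨R, hR, hRmult⟩ := hL.1.exists_compatible_of_drop hG hF hW c.length
      (by simp [IsCompatible])
    obtain ⟨R', hR', hRmult'⟩ := ih hL.2
    refine ⟨R + R', fun d hd => ?_,
      by rw [atoms_add, mult_add, hRmult, hRmult', atoms_cons, mult_add]⟩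
    rcases Multiset.mem_add.1 hd with hd | hd
    · exact (hR d hd).imp_right (.imp_right fun h => ⟨c, Multiset.mem_cons_self c L, h⟩)
    · obtain ⟨htower, hcompat, b, hb, h⟩ := hR' d hd
      exact ⟨htower, hcompat, b, Multiset.mem_cons_of_mem hb, h⟩

end Compatible

/-! ### Stacked columns and their imbalance -/

section Stacked

variable {X : Type*} [TopologicalSpace X] [MeasurableSpace X] {K : Set (ProbabilityMeasure X)}
  {T : KRPartition X K} {U V : Set X} {m n : ℤ} {c d : List (Set X)} {f : Set X → Set X}

/-- The `i`-th column of a KR-partition, as a list of sets from base to top. -/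
def KRPartition.column (T : KRPartition X K) (i : Fin T.numCols) : List (Set X) :=
  List.ofFn (T.atom i)

theorem KRPartition.isTower_column (T : KRPartition X K) (i : Fin T.numCols) :
    IsTower K (T.column i) where
  ne_nil := by simp [column]
  isClopen := List.forall_mem_ofFn_iff.2 (T.clopen i)
  kEquiv := by
    simp only [column, List.forall_mem_ofFn_iff]
    exact T.equivK i

theorem KRPartition.mult_atoms_column (T : KRPartition X K) :
    mult (atoms (Finset.univ.val.map T.column)) = 1 :=
  mult_atoms_ofFn_eq_one_iff.2 T.partition

/-- A tower obtained by cutting and stacking columns of `T`, which is compatible with `U` and `V`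
and has imbalance `n`: it has `n` more atoms in `U` than in `V`. The imbalance of a column with
empty atoms is unconstrained, so that it is preserved by every cut. -/
structure IsStackedColumn (T : KRPartition X K) (U V : Set X) (n : ℤ) (c : List (Set X)) : Prop
    extends IsTower K c where
  exists_word : ∃ w : List (Fin T.numCols), IsSubcolumn c (w.flatMap T.column)
  isCompatible_left : IsCompatible U c
  isCompatible_right : IsCompatible V c
  imbalance : (∀ A ∈ c, A.Nonempty) → (numIn U c : ℤ) - numIn V c = n

theorem IsStackedColumn.map (hc : IsStackedColumn T U V n c) (hf : IsCut K c f) :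
    IsStackedColumn T U V n (c.map f) where
  toIsTower := hc.toIsTower.map hf
  exists_word := hc.exists_word.imp fun _ hw => hf.isSubcolumn_map.trans hw
  isCompatible_left := hc.isCompatible_left.of_isSubcolumn hf.isSubcolumn_map
  isCompatible_right := hc.isCompatible_right.of_isSubcolumn hf.isSubcolumn_map
  imbalance h := by
    rw [hc.isCompatible_left.numIn_eq_of_isSubcolumn hf.isSubcolumn_map h,
      hc.isCompatible_right.numIn_eq_of_isSubcolumn hf.isSubcolumn_map h]
    exact hc.imbalance fun A hA => (h _ (List.mem_map_of_mem hA)).mono (hf.subset A hA)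

theorem IsStackedColumn.append (hc : IsStackedColumn T U V m c) (hd : IsStackedColumn T U V n d)
    (h : KEquiv K (columnBase c) (columnBase d)) : IsStackedColumn T U V (m + n) (c ++ d) where
  toIsTower := hc.toIsTower.append hd.toIsTower h
  exists_word := by
    obtain ⟨v, hv⟩ := hc.exists_word
    obtain ⟨w, hw⟩ := hd.exists_word
    refine ⟨v ++ w, ?_⟩
    rw [List.flatMap_append]
    exact List.rel_append hv hw
  isCompatible_left := hc.isCompatible_left.append hd.isCompatible_left
  isCompatible_right := hc.isCompatible_right.append hd.isCompatible_right
  imbalance hne := by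
    rw [List.forall_mem_append] at hne
    rw [numIn_append, numIn_append, ← hc.imbalance hne.1, ← hd.imbalance hne.2]
    push_cast
    ring

theorem IsStackedColumn.swap (hc : IsStackedColumn T U V n c) : IsStackedColumn T V U (-n) c where
  toIsTower := hc.toIsTower
  exists_word := hc.exists_word
  isCompatible_left := hc.isCompatible_right
  isCompatible_right := hc.isCompatible_left
  imbalance h := by rw [← hc.imbalance h, neg_sub]

theorem IsStackedColumn.isClopen_columnBase (hc : IsStackedColumn T U V n c) :
    IsClopen (columnBase c) :=
  hc.isClopen _ (columnBase_mem hc.ne_nil)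

theorem IsStackedColumn.measure_eq (hc : IsStackedColumn T U V n c) {μ : ProbabilityMeasure X}
    (hμ : μ ∈ K) {A : Set X} (hA : A ∈ c) : μ A = μ (columnBase c) :=
  hc.kEquiv A hA _ (columnBase_mem hc.ne_nil) μ hμ

theorem IsStackedColumn.numIn_eq (hne : K.Nonempty) (hF : ∀ μ ∈ K, FullSupport μ)
    (hc : IsStackedColumn T U V 0 c) : numIn U c = numIn V c := by
  by_cases hbase : (columnBase c).Nonempty
  · exact_mod_cast sub_eq_zero.1 (hc.imbalance fun A hA => (hc.nonempty_iff hne hF hA).2 hbase)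
  · have hempty : ∀ A ∈ c, A = ∅ := fun A hA =>
      Set.not_nonempty_iff_eq_empty.1 (mt (hc.nonempty_iff hne hF hA).1 hbase)
    have hall : ∀ W, numIn W c = c.length := fun W =>
      List.countP_eq_length.2 fun A hA => by simp [hempty A hA]
    rw [hall, hall]

theorem IsStackedColumn.imbalance_mul_measure (hc : IsStackedColumn T U V n c)
    {μ : ProbabilityMeasure X} (hμ : μ ∈ K) :
    (n : ℝ) * μ (columnBase c) =
      (c.map fun A => μ (A ∩ U)).sum - (c.map fun A => μ (A ∩ V)).sum := by
  rw [hc.isCompatible_left.sum_measure_inter fun A => hc.measure_eq hμ,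
    hc.isCompatible_right.sum_measure_inter fun A => hc.measure_eq hμ]
  by_cases h : ∀ A ∈ c, A.Nonempty
  · rw [← hc.imbalance h]
    push_cast
    ring
  · push Not at h
    obtain ⟨A, hA, rfl⟩ := h
    simp [← hc.measure_eq hμ hA]

/-- A partition of the space into stacked columns, each of them listed with its imbalance. -/
structure IsStackedPartition (T : KRPartition X K) (U V : Set X)
    (R : Multiset (ℤ × List (Set X))) : Prop where
  isStackedColumn : ∀ q ∈ R, IsStackedColumn T U V q.1 q.2
  mult_atoms : mult (atoms (R.map Prod.snd)) = 1

theorem IsStackedPartition.swap {R : Multiset (ℤ × List (Set X))}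
    (hR : IsStackedPartition T U V R) :
    IsStackedPartition T V U (R.map fun q => (-q.1, q.2)) where
  isStackedColumn := Multiset.forall_mem_map_iff.2 fun q hq => (hR.isStackedColumn q hq).swap
  mult_atoms := by simpa only [Multiset.map_map, Function.comp_def] using hR.mult_atoms

theorem exists_isStackedPartition [OpensMeasurableSpace X] (hG : Good K)
    (hF : ∀ μ ∈ K, FullSupport μ) (hU : IsClopen U) (hV : IsClopen V) (T : KRPartition X K) :
    ∃ R, IsStackedPartition T U V R := by
  have hT : ∀ c ∈ Finset.univ.val.map T.column, IsTower K c :=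
    Multiset.forall_mem_map_iff.2 fun i _ => T.isTower_column i
  obtain ⟨L, hL, hLmult⟩ := exists_compatible hG hF hU hT
  obtain ⟨R, hR, hRmult⟩ := exists_compatible hG hF hV fun c hc => (hL c hc).1
  refine ⟨R.map fun d => ((numIn U d : ℤ) - numIn V d, d),
    Multiset.forall_mem_map_iff.2 fun d hd => ?_, ?_⟩
  · obtain ⟨htower, hdV, c, hc, hdc⟩ := hR d hd
    obtain ⟨-, hcU, b, hb, hcb⟩ := hL c hc
    obtain ⟨i, -, rfl⟩ := Multiset.mem_map.1 hb
    exact ⟨htower, ⟨[i], by simpa using hdc.trans hcb⟩, hcU.of_isSubcolumn hdc, hdV, fun _ => rfl⟩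
  · simpa only [Multiset.map_map, Function.comp_def, Multiset.map_id'] using
      (hRmult.trans hLmult).trans T.mult_atoms_column

theorem IsStackedPartition.mult_columnBase_le_one {R : Multiset (ℤ × List (Set X))}
    (hR : IsStackedPartition T U V R) : mult (R.map fun q => columnBase q.2) ≤ 1 := by
  have h := map_columnBase_le_atoms (L := R.map Prod.snd)
    (Multiset.forall_mem_map_iff.2 fun q hq => (hR.isStackedColumn q hq).ne_nil)
  rw [Multiset.map_map] at h
  exact (mult_mono h).trans hR.mult_atoms.le

variable [OpensMeasurableSpace X] {R : Multiset (ℤ × List (Set X))}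

theorem measure_eq_sum_measure_inter {L : Multiset (List (Set X))}
    (hL : ∀ c ∈ L, ∀ A ∈ c, IsClopen A) (hmult : mult (atoms L) = 1) (μ : ProbabilityMeasure X)
    {W : Set X} (hW : IsClopen W) :
    μ W = (L.map fun c => (c.map fun A => μ (A ∩ W)).sum).sum := by
  have hclopen : ∀ A ∈ (atoms L).map (· ∩ W), IsClopen A := by
    simp only [atoms, Multiset.mem_map, Multiset.mem_bind, Multiset.mem_coe]
    rintro _ ⟨A, ⟨c, hc, hA⟩, rfl⟩
    exact (hL c hc A hA).inter hW
  rw [← sum_measure_eq_of_mult_eq_indicator μ hclopen (by rw [mult_map_inter, hmult]),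
    Multiset.map_map, atoms, Multiset.map_bind, Multiset.sum_bind]
  rfl

theorem IsStackedPartition.sum_imbalance_mul_measure (hR : IsStackedPartition T U V R)
    (hU : IsClopen U) (hV : IsClopen V) {μ : ProbabilityMeasure X} (hμ : μ ∈ K) :
    (R.map fun q => (q.1 : ℝ) * μ (columnBase q.2)).sum = μ U - μ V := by
  have hclopen : ∀ c ∈ R.map Prod.snd, ∀ A ∈ c, IsClopen A := by
    simp only [Multiset.mem_map]
    rintro _ ⟨q, hq, rfl⟩
    exact (hR.isStackedColumn q hq).isClopen
  rw [Multiset.map_congr rfl fun q hq => (hR.isStackedColumn q hq).imbalance_mul_measure hμ,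
    Multiset.sum_map_sub, measure_eq_sum_measure_inter hclopen hR.mult_atoms μ hU,
    measure_eq_sum_measure_inter hclopen hR.mult_atoms μ hV, NNReal.coe_multiset_sum,
    NNReal.coe_multiset_sum]
  simp only [Multiset.map_map, Function.comp_apply]

end Stacked

/-! ### Decreasing the imbalance -/

section Reduction

variable {X : Type*} [TopologicalSpace X] [MeasurableSpace X] {K : Set (ProbabilityMeasure X)}

theorem sum_mul_measure_eq_zero_or_pos (hF : ∀ μ ∈ K, FullSupport μ) {s : Multiset (ℝ × Set X)}
    (hs : ∀ q ∈ s, IsOpen q.2) (hnonneg : ∀ q ∈ s, 0 ≤ q.1) :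
    (∀ μ ∈ K, (s.map fun q => q.1 * (μ q.2 : ℝ)).sum = 0) ∨
      ∀ μ ∈ K, 0 < (s.map fun q => q.1 * (μ q.2 : ℝ)).sum := by
  by_cases h : ∃ q ∈ s, 0 < q.1 ∧ q.2.Nonempty
  · obtain ⟨q, hq, hq1, hq2⟩ := h
    refine .inr fun μ hμ => ?_
    have hle : q.1 * μ q.2 ≤ (s.map fun q => q.1 * (μ q.2 : ℝ)).sum :=
      Multiset.single_le_sum
        (Multiset.forall_mem_map_iff.2 fun r hr => mul_nonneg (hnonneg r hr) NNReal.zero_le_coe) _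
        (Multiset.mem_map_of_mem _ hq)
    exact (mul_pos hq1 (by exact_mod_cast hF μ hμ _ (hs q hq) hq2)).trans_le hle
  · push Not at h
    refine .inl fun μ _ => Multiset.sum_eq_zero ?_
    refine Multiset.forall_mem_map_iff.2 fun q hq => ?_
    rcases (hnonneg q hq).eq_or_lt with hq1 | hq1
    · rw [← hq1, zero_mul]
    · simp [h q hq hq1]

variable [OpensMeasurableSpace X]

theorem sum_measure_eq_measure_iUnion {ι : Type*} (μ : ProbabilityMeasure X) {s : Multiset ι}
    {A : ι → Set X} (hA : ∀ i ∈ s, IsClopen (A i)) (hmult : mult (s.map A) ≤ 1) :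
    (s.map fun i => (μ (A i) : ℝ)).sum = μ (⋃ i ∈ s, A i) := by
  have hunion : (⋃ B ∈ s.map A, B) = ⋃ i ∈ s, A i := by
    ext x
    simp
  rw [← hunion, ← sum_measure_eq_of_mult_eq_indicator μ (Multiset.forall_mem_map_iff.2 hA)
    (mult_eq_indicator_iUnion hmult), NNReal.coe_multiset_sum, Multiset.map_map, Multiset.map_map]
  rfl

theorem Good.exists_subset_iUnion_of_sum_eq_zero (hG : Good K) (hF : ∀ μ ∈ K, FullSupport μ)
    {ι : Type*} {s : Multiset ι} {w : ι → ℝ} {A : ι → Set X} {B : Set X} {m : ℝ} (hB : IsClopen B)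
    (hA : ∀ i ∈ s, IsClopen (A i)) (hmult : mult (s.map A) ≤ 1) (hm : 0 < m)
    (hbound : ∀ i ∈ s, -m ≤ w i)
    (hrel : ∀ μ ∈ K, m * μ B + (s.map fun i => w i * (μ (A i) : ℝ)).sum = 0) :
    ∃ C, IsClopen C ∧ C ⊆ ⋃ i ∈ s.filter (w · < 0), A i ∧ KEquiv K C B := by
  set s₁ := s.filter (w · < 0)
  set s₂ := s.filter (¬ w · < 0)
  have hs12 : s₁ + s₂ = s := Multiset.filter_add_not _ s
  have hmem₁ : ∀ i ∈ s₁, i ∈ s := fun i hi => Multiset.mem_of_mem_filter hi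
  set Y := ⋃ i ∈ s₁, A i
  have hYclopen : IsClopen Y :=
    (Multiset.finite_toSet s₁).isClopen_biUnion fun i hi => hA i (hmem₁ i hi)
  have hYmeasure : ∀ μ : ProbabilityMeasure X, (s₁.map fun i => (μ (A i) : ℝ)).sum = μ Y :=
    fun μ => sum_measure_eq_measure_iUnion μ (fun i hi => hA i (hmem₁ i hi))
      ((mult_mono (Multiset.map_le_map (Multiset.filter_le _ s))).trans hmult)
  -- `m (μ Y - μ B)` is a combination of measures of clopen sets with nonnegative coefficients.
  set t := s₁.map (fun i => (m + w i, A i)) + s₂.map (fun i => (w i, A i)) with ht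
  have hsum : ∀ μ ∈ K, (t.map fun q => q.1 * (μ q.2 : ℝ)).sum = m * (μ Y - μ B) := fun μ hμ => by
    have h := hrel μ hμ
    rw [← hs12, Multiset.map_add, Multiset.sum_add] at h
    simp only [ht, Multiset.map_add, Multiset.sum_add, Multiset.map_map, Function.comp_def, add_mul,
      Multiset.sum_map_add, Multiset.sum_map_mul_left, hYmeasure]
    linarith
  have htopen : ∀ q ∈ t, IsOpen q.2 := by
    simp only [ht, Multiset.mem_add, Multiset.mem_map]
    rintro _ (⟨i, hi, rfl⟩ | ⟨i, hi, rfl⟩)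
    exacts [(hA i (hmem₁ i hi)).isOpen, (hA i (Multiset.mem_of_mem_filter hi)).isOpen]
  have htnonneg : ∀ q ∈ t, 0 ≤ q.1 := by
    simp only [ht, Multiset.mem_add, Multiset.mem_map]
    rintro _ (⟨i, hi, rfl⟩ | ⟨i, hi, rfl⟩)
    exacts [neg_le_iff_add_nonneg'.1 (hbound i (hmem₁ i hi)), not_lt.1 (Multiset.mem_filter.1 hi).2]
  rcases sum_mul_measure_eq_zero_or_pos hF htopen htnonneg with h | h
  · refine ⟨Y, hYclopen, subset_rfl, fun μ hμ => ?_⟩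
    have h0 := (hsum μ hμ).symm.trans (h μ hμ)
    exact_mod_cast sub_eq_zero.1 ((mul_eq_zero.1 h0).resolve_left hm.ne')
  · refine hG B Y hB hYclopen fun μ hμ => ?_
    have hpos := (hsum μ hμ) ▸ h μ hμ
    exact_mod_cast sub_pos.1 (pos_of_mul_pos_right hpos hm.le)

variable {T : KRPartition X K} {U V : Set X}

theorem IsStackedColumn.exists_stack (hne : K.Nonempty) (hG : Good K)
    (hF : ∀ μ ∈ K, FullSupport μ) {n : ℤ} {p : List (Set X)} (hp : IsStackedColumn T U V n p)
    {C : Set X} (hC : IsClopen C) (hCp : KEquiv K C (columnBase p))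
    {J : Multiset (ℤ × List (Set X))} (hJ : ∀ q ∈ J, IsStackedColumn T U V q.1 q.2)
    (hCJ : C ⊆ ⋃ q ∈ J, columnBase q.2) :
    ∃ N J' : Multiset (ℤ × List (Set X)),
      (∀ r ∈ N, IsStackedColumn T U V r.1 r.2 ∧ ∃ q ∈ J, r.1 = n + q.1) ∧
      (∀ r ∈ J', IsStackedColumn T U V r.1 r.2) ∧ J'.map Prod.fst = J.map Prod.fst ∧
      mult (atoms ((N + J').map Prod.snd)) = mult (atoms (((n, p) ::ₘ J).map Prod.snd)) := by
  induction J using Multiset.induction_on generalizing p C with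
  | empty =>
    obtain rfl : C = ∅ := by simpa using hCJ
    have hbase : ¬(columnBase p).Nonempty := fun h => Set.not_nonempty_empty <|
      (hCp.nonempty_iff hne hF hC.isOpen hp.isClopen_columnBase.isOpen).2 h
    exact ⟨0, 0, by simp, by simp, rfl, by simp [atoms, hp.mult_eq_zero hne hF hbase]⟩
  | cons q J ih =>
    rw [Multiset.forall_mem_cons] at hJ
    obtain ⟨hq, hJ⟩ := hJ
    have hz : IsClopen (C ∩ columnBase q.2) := hC.inter hq.isClopen_columnBase
    obtain ⟨D, hD, hDp, hDz⟩ := hG.exists_subset_of_add_eq hF hz (hC.diff hz)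
      hp.isClopen_columnBase fun μ hμ => by
        rw [measure_add_measure_sdiff μ hz Set.inter_subset_left, hCp μ hμ]
    obtain ⟨f, hf, hfD⟩ := hp.exists_isCut hG hF (columnBase_mem hp.ne_nil) hD hDp
    obtain ⟨g, hg, hgz⟩ := hq.exists_isCut hG hF (columnBase_mem hq.ne_nil) hz
      Set.inter_subset_right
    have hstack := (hp.map hf).append (hq.map hg)
      (by rwa [columnBase_map hp.ne_nil, columnBase_map hq.ne_nil, hfD, hgz])
    have hrest : KEquiv K (C \ (C ∩ columnBase q.2)) (columnBase (p.map fun A => A \ f A)) := by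
      rw [columnBase_map hp.ne_nil, hfD]
      exact .sdiff hz Set.inter_subset_left hD hDp hCp hDz.symm
    have hrestJ : C \ (C ∩ columnBase q.2) ⊆ ⋃ q ∈ J, columnBase q.2 := by
      rw [Set.sdiff_self_inter, Set.sdiff_subset_iff]
      simpa using hCJ
    obtain ⟨N, J', hN, hJ', hfst, hmult⟩ := ih (hp.map (hf.compl hp.toIsTower)) (hC.diff hz) hrest
      hJ hrestJ
    refine ⟨(n + q.1, p.map f ++ q.2.map g) ::ₘ N, (q.1, q.2.map fun A => A \ g A) ::ₘ J',
      Multiset.forall_mem_cons.2 ⟨⟨hstack, q, Multiset.mem_cons_self q J, rfl⟩, fun r hr =>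
        (hN r hr).imp_right fun ⟨b, hb, h⟩ => ⟨b, Multiset.mem_cons_of_mem hb, h⟩⟩,
      Multiset.forall_mem_cons.2 ⟨hq.map (hg.compl hq.toIsTower), hJ'⟩, by simp [hfst], ?_⟩
    simp only [Multiset.cons_add, Multiset.add_cons, Multiset.map_cons, atoms_cons, mult_add,
      ← Multiset.coe_add, hmult, ← hf.mult_add_mult, ← hg.mult_add_mult]
    abel

theorem IsStackedPartition.exists_kEquiv_columnBase (hG : Good K) (hF : ∀ μ ∈ K, FullSupport μ)
    (hU : IsClopen U) (hV : IsClopen V) (hUV : KEquiv K U V) {m : ℤ} {p : List (Set X)}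
    {R : Multiset (ℤ × List (Set X))} (hpR : IsStackedPartition T U V ((m, p) ::ₘ R)) (hm : 0 < m)
    (hbound : ∀ q ∈ R, |q.1| ≤ m) :
    ∃ C, IsClopen C ∧ C ⊆ ⋃ q ∈ R.filter (·.1 < 0), columnBase q.2 ∧
      KEquiv K C (columnBase p) := by
  obtain ⟨hp, hR⟩ := Multiset.forall_mem_cons.1 hpR.isStackedColumn
  have hbases : mult (R.map fun q => columnBase q.2) ≤ 1 :=
    (mult_mono (Multiset.map_le_map (Multiset.le_cons_self R _))).trans hpR.mult_columnBase_le_one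
  have hrel : ∀ μ ∈ K, (m : ℝ) * μ (columnBase p) +
      (R.map fun q => (q.1 : ℝ) * (μ (columnBase q.2) : ℝ)).sum = 0 := fun μ hμ => by
    have h := hpR.sum_imbalance_mul_measure hU hV hμ
    rwa [hUV μ hμ, sub_self, Multiset.map_cons, Multiset.sum_cons] at h
  simpa only [Int.cast_lt_zero] using
    hG.exists_subset_iUnion_of_sum_eq_zero hF hp.isClopen_columnBase
      (fun q hq => (hR q hq).isClopen_columnBase) hbases (by exact_mod_cast hm)
      (fun q hq => by exact_mod_cast (abs_le.1 (hbound q hq)).1) hrel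

theorem IsStackedPartition.exists_isDershowitzMannaLT (hne : K.Nonempty) (hG : Good K)
    (hF : ∀ μ ∈ K, FullSupport μ) (hU : IsClopen U) (hV : IsClopen V) (hUV : KEquiv K U V) {m : ℤ}
    {p : List (Set X)} {R : Multiset (ℤ × List (Set X))}
    (hpR : IsStackedPartition T U V ((m, p) ::ₘ R)) (hm : 0 < m) (hbound : ∀ q ∈ R, |q.1| ≤ m) :
    ∃ R', IsStackedPartition T U V R' ∧ (R'.map fun q => q.1.natAbs).IsDershowitzMannaLT
      (((m, p) ::ₘ R).map fun q => q.1.natAbs) := by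
  obtain ⟨hp, hR⟩ := Multiset.forall_mem_cons.1 hpR.isStackedColumn
  obtain ⟨C, hC, hCJ, hCp⟩ := hpR.exists_kEquiv_columnBase hG hF hU hV hUV hm hbound
  obtain ⟨N, J, hN, hJ, hfst, hNJ⟩ := hp.exists_stack hne hG hF hC hCp
    (fun q hq => hR q (Multiset.mem_of_mem_filter hq)) hCJ
  have hsplit := Multiset.filter_add_not (fun q : ℤ × List (Set X) => q.1 < 0) R
  have hweights := congrArg (Multiset.map Int.natAbs) hfst
  simp only [Multiset.map_map, Function.comp_def] at hweights
  refine ⟨N + J + R.filter (¬ ·.1 < 0), ⟨fun q hq => ?_, ?_⟩, R.map fun q => q.1.natAbs,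
    N.map fun q => q.1.natAbs, {m.natAbs}, Multiset.singleton_ne_zero _, ?_, ?_, ?_⟩
  · rcases Multiset.mem_add.1 hq with hq | hq
    · exact (Multiset.mem_add.1 hq).elim (fun h => (hN q h).1) (hJ q)
    · exact hR q (Multiset.mem_of_mem_filter hq)
  · rw [Multiset.map_add, atoms_add, mult_add, hNJ, ← mult_add, ← atoms_add, ← Multiset.map_add,
      Multiset.cons_add, hsplit]
    exact hpR.mult_atoms
  · rw [Multiset.map_add, Multiset.map_add, hweights, add_assoc, ← Multiset.map_add, hsplit,
      add_comm]
  · rw [Multiset.map_cons, ← Multiset.singleton_add, add_comm]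
  · refine Multiset.forall_mem_map_iff.2 fun r hr => ⟨_, Multiset.mem_singleton_self _, ?_⟩
    obtain ⟨-, q, hq, hrq⟩ := hN r hr
    obtain ⟨hqR, hq0⟩ := Multiset.mem_filter.1 hq
    have hqm := (abs_le.1 (hbound q hqR)).1
    omega

theorem IsStackedPartition.exists_reduction (hne : K.Nonempty) (hG : Good K)
    (hF : ∀ μ ∈ K, FullSupport μ) (hU : IsClopen U) (hV : IsClopen V) (hUV : KEquiv K U V)
    {R : Multiset (ℤ × List (Set X))} (hR : IsStackedPartition T U V R)
    (himbalanced : ∃ q ∈ R, q.1 ≠ 0) :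
    ∃ R', IsStackedPartition T U V R' ∧
      (R'.map fun q => q.1.natAbs).IsDershowitzMannaLT (R.map fun q => q.1.natAbs) := by
  classical
  obtain ⟨q, hq, hq0⟩ := himbalanced
  obtain ⟨⟨m, p⟩, hpR, hmax⟩ :=
    R.toFinset.exists_max_image (fun q => |q.1|) ⟨q, Multiset.mem_toFinset.2 hq⟩
  simp only [Multiset.mem_toFinset] at hpR hmax
  have hm : m ≠ 0 := abs_pos.1 ((abs_pos.2 hq0).trans_le (hmax q hq))
  obtain ⟨R, rfl⟩ := Multiset.exists_cons_of_mem hpR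
  rw [Multiset.forall_mem_cons] at hmax
  rcases hm.lt_or_gt with hm | hm
  · have hswap := hR.swap
    rw [Multiset.map_cons] at hswap
    obtain ⟨R', hR', hlt⟩ := hswap.exists_isDershowitzMannaLT hne hG hF hV hU hUV.symm
      (neg_pos.2 hm) (Multiset.forall_mem_map_iff.2 fun q hq => by
        simpa only [abs_neg, abs_of_neg hm] using hmax.2 q hq)
    refine ⟨_, hR'.swap, ?_⟩
    simpa only [Multiset.map_cons, Multiset.map_map, Function.comp_def, Int.natAbs_neg] using hlt
  · exact hR.exists_isDershowitzMannaLT hne hG hF hU hV hUV hm fun q hq =>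
      abs_of_pos hm ▸ hmax.2 q hq

theorem IsStackedPartition.exists_balanced (hne : K.Nonempty) (hG : Good K)
    (hF : ∀ μ ∈ K, FullSupport μ) (hU : IsClopen U) (hV : IsClopen V) (hUV : KEquiv K U V)
    {R : Multiset (ℤ × List (Set X))} (hR : IsStackedPartition T U V R) :
    ∃ R', IsStackedPartition T U V R' ∧ ∀ q ∈ R', q.1 = 0 := by
  induction R using (InvImage.wf (fun R : Multiset (ℤ × List (Set X)) => R.map fun q => q.1.natAbs)
    Multiset.wellFounded_isDershowitzMannaLT).induction with
  | _ R ih =>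
  by_cases hbalanced : ∀ q ∈ R, q.1 = 0
  · exact ⟨R, hR, hbalanced⟩
  · push Not at hbalanced
    obtain ⟨R', hR', hlt⟩ := hR.exists_reduction hne hG hF hU hV hUV hbalanced
    exact ih R' hlt hR'

end Reduction

/-! ### KR-partitions from families of columns -/

section Assembly

theorem getElem?_flatMap_ofFn {α β : Type*} (g : α → List β) {m : ℕ} (idx : Fin m → α) (k : Fin m)
    {j : ℕ} (hj : j < (g (idx k)).length) :
    ((List.ofFn idx).flatMap g)[(∑ l ∈ Finset.Iio k, (g (idx l)).length) + j]? =
      some (g (idx k))[j] := by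
  have hk : k.1 < (List.ofFn idx).length := by simp
  have hsplit : (List.ofFn idx).flatMap g = ((List.ofFn idx).take k).flatMap g ++
      (g (idx k) ++ ((List.ofFn idx).drop (k + 1)).flatMap g) := by
    conv_lhs => rw [← List.take_append_drop k.1 (List.ofFn idx), List.drop_eq_getElem_cons hk]
    simp
  have hlen : (((List.ofFn idx).take k).flatMap g).length =
      ∑ l ∈ Finset.Iio k, (g (idx l)).length := by
    rw [List.length_flatMap, List.map_take, List.map_ofFn, List.sum_take_ofFn]
    refine Finset.sum_congr ?_ fun _ _ => rfl
    ext l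
    simp
  rw [hsplit, ← hlen, List.getElem?_append_right (Nat.le_add_right _ _), Nat.add_sub_cancel_left,
    List.getElem?_append_left hj, List.getElem?_eq_getElem hj]

theorem exists_ofFn_eq {α : Type*} {l : List α} (hl : l ≠ []) :
    ∃ (n : ℕ) (f : Fin (n + 1) → α), List.ofFn f = l := by
  obtain ⟨a, l, rfl⟩ := List.exists_cons_of_ne_nil hl
  exact ⟨l.length, (a :: l).get, List.ofFn_get _⟩

variable {X : Type*}

theorem numIn_ofFn {W : Set X} {n : ℕ} (A : Fin n → Set X) :
    numIn W (List.ofFn A) = Nat.card {j : Fin n // A j ⊆ W} := by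
  classical
  rw [Nat.card_eq_fintype_card, Fintype.card_subtype, numIn, ← Multiset.coe_countP,
    ← Fin.univ_val_map, Multiset.countP_map]
  rfl

variable [TopologicalSpace X] [MeasurableSpace X] {K : Set (ProbabilityMeasure X)}
  {S T : KRPartition X K}

theorem exists_krPartition {L : Multiset (List (Set X))} (hL : ∀ c ∈ L, IsTower K c)
    (hmult : mult (atoms L) = 1) : ∃ S : KRPartition X K, ∀ i, S.column i ∈ L := by
  obtain ⟨l, rfl⟩ : ∃ l : List (List (Set X)), ↑l = L := ⟨L.toList, L.coe_toList⟩
  simp only [Multiset.mem_coe] at hL ⊢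
  choose height A hA using fun i : Fin l.length =>
    exists_ofFn_eq (hL _ (List.getElem_mem i.2)).ne_nil
  have hmem : ∀ i, List.ofFn (A i) ∈ l := fun i => (hA i).symm ▸ List.getElem_mem i.2
  refine ⟨⟨l.length, height, A, fun i => List.forall_mem_ofFn_iff.1 (hL _ (hmem i)).isClopen,
    fun i j j' => (hL _ (hmem i)).kEquiv _ (List.mem_ofFn.2 ⟨j, rfl⟩) _ (List.mem_ofFn.2 ⟨j', rfl⟩),
    mult_atoms_ofFn_eq_one_iff.1 ?_⟩, hmem⟩
  rw [← hmult, Fin.univ_val_map, funext hA, List.ofFn_getElem]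

theorem KRPartition.base_subset_of_isSubcolumn
    (hST : ∀ i, ∃ w : List (Fin T.numCols), IsSubcolumn (S.column i) (w.flatMap T.column)) :
    S.base ⊆ T.base := by
  refine Set.iUnion_subset fun i => ?_
  obtain ⟨w, hw⟩ := hST i
  rw [column, List.ofFn_succ] at hw
  obtain _ | ⟨k, w⟩ := w
  · cases hw
  · rw [List.flatMap_cons, column, List.ofFn_succ] at hw
    exact (List.forall₂_cons.1 hw).1.trans (Set.subset_iUnion (fun i => T.atom i 0) k)

theorem KRPartition.top_subset_of_isSubcolumn
    (hST : ∀ i, ∃ w : List (Fin T.numCols), IsSubcolumn (S.column i) (w.flatMap T.column)) :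
    S.top ⊆ T.top := by
  refine Set.iUnion_subset fun i => ?_
  obtain ⟨w, hw⟩ := hST i
  rw [IsSubcolumn, ← List.forall₂_reverse_iff, column, List.ofFn_succ', List.concat_eq_append,
    List.reverse_concat] at hw
  obtain rfl | ⟨w, k, rfl⟩ := List.eq_nil_or_concat w
  · cases hw
  · rw [List.concat_eq_append, List.flatMap_append, List.flatMap_singleton, column,
      List.ofFn_succ', List.concat_eq_append, ← List.append_assoc, List.reverse_concat] at hw
    exact (List.forall₂_cons.1 hw).1.trans (Set.subset_iUnion (fun i => T.atom i (Fin.last _)) k)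

theorem KRPartition.refines_of_isSubcolumn
    (hST : ∀ i, ∃ w : List (Fin T.numCols), IsSubcolumn (S.column i) (w.flatMap T.column)) :
    S.Refines T := by
  refine ⟨base_subset_of_isSubcolumn hST, top_subset_of_isSubcolumn hST, fun i => ?_⟩
  obtain ⟨w, hw⟩ := hST i
  obtain ⟨m, idx, rfl⟩ := exists_ofFn_eq (l := w) <| by
    rintro rfl
    exact (S.isTower_column i).ne_nil (List.forall₂_nil_right_iff.1 hw)
  have hlen : ∀ k, (T.column k).length = T.height k + 1 := fun k => List.length_ofFn
  have hheight : S.height i + 1 = ∑ k, (T.height (idx k) + 1) := by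
    have h := hw.length_eq
    rw [List.length_flatMap, List.map_ofFn, List.sum_ofFn, column, List.length_ofFn] at h
    simpa only [Function.comp_apply, hlen] using h
  have hatom : ∀ (k : Fin (m + 1)) (j : Fin (T.height (idx k) + 1)),
      ∃ hlt : (∑ l ∈ Finset.Iio k, (T.height (idx l) + 1)) + (j : ℕ) < S.height i + 1,
        S.atom i ⟨_, hlt⟩ ⊆ T.atom (idx k) j := fun k j => by
    have h := getElem?_flatMap_ofFn T.column idx k (j.2.trans_eq (hlen _).symm)
    simp only [hlen] at h
    obtain ⟨hlt, hget⟩ := List.getElem?_eq_some_iff.1 h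
    have hlt' := hlt.trans_eq hw.length_eq.symm
    have hsub := hw.get hlt' hlt
    rw [List.get_eq_getElem, List.get_eq_getElem, hget] at hsub
    simp only [column, List.getElem_ofFn, List.length_ofFn] at hsub hlt'
    exact ⟨hlt', hsub⟩
  exact ⟨m, idx, fun k j => S.atom i ⟨_, (hatom k j).1⟩, fun k j => (hatom k j).2, hheight,
    fun _ _ _ => rfl⟩

end Assembly

end DynSimplex

theorem exists_refinement_compatible_balanced_general
    {X : Type*} [TopologicalSpace X] [MeasurableSpace X] [OpensMeasurableSpace X]
    (K : Set (MeasureTheory.ProbabilityMeasure X)) (hne : K.Nonempty)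
    (hF : ∀ μ ∈ K, DynSimplex.FullSupport μ) (hG : DynSimplex.Good K)
    (T : DynSimplex.KRPartition X K)
    (U V : Set X) (hU : IsClopen U) (hV : IsClopen V) (hUV : ∀ μ ∈ K, μ U = μ V) :
    ∃ S : DynSimplex.KRPartition X K, S.Refines T ∧
      S.Compatible U ∧ S.Compatible V ∧
      ∀ i : Fin S.numCols,
        Nat.card {j : Fin (S.height i + 1) // S.atom i j ⊆ U} =
        Nat.card {j : Fin (S.height i + 1) // S.atom i j ⊆ V} := by
  obtain ⟨R₀, hR₀⟩ := DynSimplex.exists_isStackedPartition hG hF hU hV T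
  obtain ⟨R, hR, hbalanced⟩ := hR₀.exists_balanced hne hG hF hU hV hUV
  have hcolumn : ∀ c ∈ R.map Prod.snd, DynSimplex.IsStackedColumn T U V 0 c :=
    Multiset.forall_mem_map_iff.2 fun q hq => hbalanced q hq ▸ hR.isStackedColumn q hq
  obtain ⟨S, hS⟩ := DynSimplex.exists_krPartition (fun c hc => (hcolumn c hc).toIsTower)
    hR.mult_atoms
  have hScolumn := fun i => hcolumn _ (hS i)
  refine ⟨S, DynSimplex.KRPartition.refines_of_isSubcolumn fun i => (hScolumn i).exists_word,
    fun i => List.forall_mem_ofFn_iff.1 (hScolumn i).isCompatible_left,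
    fun i => List.forall_mem_ofFn_iff.1 (hScolumn i).isCompatible_right, fun i => ?_⟩
  rw [← DynSimplex.numIn_ofFn, ← DynSimplex.numIn_ofFn]
  exact (hScolumn i).numIn_eq hne hF

theorem exists_refinement_compatible_balanced
    {X : Type*} [TopologicalSpace X] [CompactSpace X]
    [TopologicalSpace.MetrizableSpace X] [TotallyDisconnectedSpace X] [PerfectSpace X]
    [Nonempty X] [MeasurableSpace X] [BorelSpace X]
    (K : Set (MeasureTheory.ProbabilityMeasure X)) (hK : DynSimplex.DynamicalSimplex K)
    (T : DynSimplex.KRPartition X K)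
    (U V : Set X) (hU : IsClopen U) (hV : IsClopen V) (hUV : ∀ μ ∈ K, μ U = μ V) :
    ∃ S : DynSimplex.KRPartition X K, S.Refines T ∧
      S.Compatible U ∧ S.Compatible V ∧
      ∀ i : Fin S.numCols,
        Nat.card {j : Fin (S.height i + 1) // S.atom i j ⊆ U} =
        Nat.card {j : Fin (S.height i + 1) // S.atom i j ⊆ V} := by
  obtain ⟨hne, -, -, hAF, hG, -⟩ := hK
  exact exists_refinement_compatible_balanced_general K hne (fun μ hμ => (hAF μ hμ).2) hG T U V
    hU hV hUV
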